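/- Let m ≥ 1, k ≥ 1, and let A be a real symmetric m×m matrix. Let Q be a random m×k matrix whose entries are independent centered normal random variables with standard deviation 1/√k. Then ‖E[Q Qᵀ A Q Qᵀ]‖ = (m/k)·‖ ((k+1)/m)·A + (tr A/m)·I ‖, where I is the m×m identity matrix and ‖·‖ denotes the operator norm. -/

import Mathlib

open Matrix MeasureTheory ProbabilityTheory

/-- The operator norm on `m × m` real matrices induced by the Euclidean norm. -/
noncomputable def opNorm {m : ℕ} (A : Matrix (Fin m) (Fin m) ℝ) : ℝ :=
  ‖Matrix.toEuclideanCLM (𝕜 := ℝ) (n := Fin m) A‖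

/-!
The expectation involves only fourth moments of the Gaussian entries of `Q`. Isserlis' formula,
which follows from `E x⁴ = 3 v²` by polarizing one pair of functionals at a time, expresses them
through covariances. Summed over entries, `G = Q Qᵀ` satisfies
`E[G i p * G q j] = v² k (k δ_ip δ_qj + δ_iq δ_pj + δ_ij δ_pq)`, where `v` is the variance of an
entry; contracting the three terms with `A` gives `k A`, `Aᵀ` and `(tr A) I`.
-/

lemma iteratedDeriv_succ_id_mul_zero {f : ℝ → ℝ} {n : ℕ} (hf : ContDiffAt ℝ (n + 1 : ℕ) f 0) :
    iteratedDeriv (n + 1) (fun t ↦ t * f t) 0 = (n + 1) * iteratedDeriv n f 0 := by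
  rw [iteratedDeriv_fun_mul contDiffAt_fun_id hf, Finset.sum_eq_single 1]
  · simp [iteratedDeriv_fun_id_zero]
  · intro i _ hi
    simp [iteratedDeriv_fun_id_zero, hi]
  · simp

lemma integral_pow_gaussianReal_eq_iteratedDeriv (v : NNReal) (n : ℕ) :
    ∫ x, x ^ n ∂gaussianReal 0 v = iteratedDeriv n (fun t : ℝ ↦ Real.exp (v * t ^ 2 / 2)) 0 := by
  have h_zero : (0 : ℝ) ∈ interior (integrableExpSet id (gaussianReal 0 v)) := by
    simp [integrableExpSet_id_gaussianReal]
  simpa [mgf_id_gaussianReal] using (iteratedDeriv_mgf_zero h_zero n).symm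

lemma integral_pow_add_two_gaussianReal (v : NNReal) (n : ℕ) :
    ∫ x, x ^ (n + 2) ∂gaussianReal 0 v = (n + 1) * v * ∫ x, x ^ n ∂gaussianReal 0 v := by
  -- The moment generating function solves `dM/dt = v t M`.
  have h_deriv : deriv (fun t : ℝ ↦ Real.exp (v * t ^ 2 / 2)) =
      fun t ↦ v * (t * Real.exp (v * t ^ 2 / 2)) := by
    ext t
    have h := (((hasDerivAt_pow 2 t).const_mul (v : ℝ)).div_const 2).exp
    rw [h.deriv]
    push_cast
    ring
  rw [integral_pow_gaussianReal_eq_iteratedDeriv, integral_pow_gaussianReal_eq_iteratedDeriv,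
    iteratedDeriv_succ', h_deriv, iteratedDeriv_const_mul_field,
    iteratedDeriv_succ_id_mul_zero (by fun_prop)]
  ring

lemma integral_pow_four_gaussianReal (v : NNReal) :
    ∫ x, x ^ 4 ∂gaussianReal 0 v = 3 * (v : ℝ) ^ 2 := by
  rw [integral_pow_add_two_gaussianReal, integral_pow_add_two_gaussianReal]
  norm_num
  ring

section Isserlis

variable {E : Type*} [NormedAddCommGroup E] [NormedSpace ℝ E] [MeasurableSpace E] [BorelSpace E]
  (μ : Measure E) [IsGaussian μ]

lemma integrable_mul_mul_mul_dual (K L M N : StrongDual ℝ E) :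
    Integrable (fun x ↦ K x * L x * M x * N x) μ := by
  have : ENNReal.HolderTriple 4 4 2 := .of_toReal ⟨by norm_num, by norm_num, by norm_num⟩
  have h_memLp (F G : StrongDual ℝ E) : MemLp (fun x ↦ F x * G x) 2 μ :=
    (IsGaussian.memLp_dual μ G 4 (by simp)).mul (IsGaussian.memLp_dual μ F 4 (by simp))
  simpa only [Pi.mul_def, mul_assoc] using (h_memLp K L).integrable_mul (h_memLp M N)

variable {μ} [CompleteSpace E] [SecondCountableTopology E]

lemma integral_dual_pow_four (hμ : μ[id] = 0) (L : StrongDual ℝ E) :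
    ∫ x, L x ^ 4 ∂μ = 3 * covarianceBilinDual μ L L ^ 2 := by
  have hL : ∫ x, L x ∂μ = 0 := by
    rw [IsGaussian.integral_dual]
    simpa using congrArg L hμ
  have h_map : μ.map L = gaussianReal 0 Var[L; μ].toNNReal := by
    rw [IsGaussian.map_eq_gaussianReal, hL]
  calc ∫ x, L x ^ 4 ∂μ = ∫ y, y ^ 4 ∂μ.map L :=
        (integral_map L.continuous.aemeasurable (continuous_pow 4).aestronglyMeasurable).symm
    _ = 3 * covarianceBilinDual μ L L ^ 2 := by
        rw [h_map, integral_pow_four_gaussianReal, Real.coe_toNNReal _ (variance_nonneg _ _),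
          covarianceBilinDual_self_eq_variance IsGaussian.memLp_two_id]

lemma integral_dual_sq_mul_sq (hμ : μ[id] = 0) (L M : StrongDual ℝ E) :
    ∫ x, L x ^ 2 * M x ^ 2 ∂μ =
      covarianceBilinDual μ L L * covarianceBilinDual μ M M
        + 2 * covarianceBilinDual μ L M ^ 2 := by
  have h_int (F : StrongDual ℝ E) : Integrable (fun x ↦ F x ^ 4) μ := by
    simpa [pow_succ] using integrable_mul_mul_mul_dual μ F F F F
  have h_polar (x : E) : L x ^ 2 * M x ^ 2 =
      ((L + M) x ^ 4 + (L - M) x ^ 4 - 2 * L x ^ 4 - 2 * M x ^ 4) / 12 := by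
    simp only [_root_.add_apply, _root_.sub_apply]
    ring
  have h_comm := covarianceBilinDual_comm (μ := μ) L M
  simp_rw [h_polar]
  rw [integral_div, integral_sub (by fun_prop) (by fun_prop),
    integral_sub (by fun_prop) (by fun_prop), integral_add (by fun_prop) (by fun_prop),
    integral_const_mul, integral_const_mul]
  simp only [integral_dual_pow_four hμ]
  simp only [map_add, map_sub, _root_.add_apply, _root_.sub_apply, ← h_comm]
  ring

lemma integral_dual_sq_mul_mul (hμ : μ[id] = 0) (L M N : StrongDual ℝ E) :
    ∫ x, L x ^ 2 * M x * N x ∂μ =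
      covarianceBilinDual μ L L * covarianceBilinDual μ M N
        + 2 * (covarianceBilinDual μ L M * covarianceBilinDual μ L N) := by
  have h_int (F : StrongDual ℝ E) : Integrable (fun x ↦ L x ^ 2 * F x ^ 2) μ := by
    simpa only [pow_two, mul_assoc] using integrable_mul_mul_mul_dual μ L L F F
  have h_polar (x : E) : L x ^ 2 * M x * N x =
      (L x ^ 2 * (M + N) x ^ 2 - L x ^ 2 * (M - N) x ^ 2) / 4 := by
    simp only [_root_.add_apply, _root_.sub_apply]
    ring
  have h_comm := covarianceBilinDual_comm (μ := μ) M N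
  simp_rw [h_polar]
  rw [integral_div, integral_sub (h_int _) (h_int _)]
  simp only [integral_dual_sq_mul_sq hμ]
  simp only [map_add, map_sub, _root_.add_apply, _root_.sub_apply, ← h_comm]
  ring

theorem integral_dual_mul_mul_mul (hμ : μ[id] = 0) (K L M N : StrongDual ℝ E) :
    ∫ x, K x * L x * M x * N x ∂μ =
      covarianceBilinDual μ K L * covarianceBilinDual μ M N
        + covarianceBilinDual μ K M * covarianceBilinDual μ L N
        + covarianceBilinDual μ K N * covarianceBilinDual μ L M := by
  have h_int (F : StrongDual ℝ E) : Integrable (fun x ↦ F x ^ 2 * M x * N x) μ := by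
    simpa only [pow_two] using integrable_mul_mul_mul_dual μ F F M N
  have h_polar (x : E) : K x * L x * M x * N x =
      ((K + L) x ^ 2 * M x * N x - (K - L) x ^ 2 * M x * N x) / 4 := by
    simp only [_root_.add_apply, _root_.sub_apply]
    ring
  have h_comm := covarianceBilinDual_comm (μ := μ) K L
  simp_rw [h_polar]
  rw [integral_div, integral_sub (h_int _) (h_int _)]
  simp only [integral_dual_sq_mul_mul hμ]
  simp only [map_add, map_sub, _root_.add_apply, _root_.sub_apply, ← h_comm]
  ring

end Isserlis

section ProductMeasure

variable {ι : Type*} [Fintype ι]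

lemma covariance_eval_pi [DecidableEq ι] {Ω : Type*} [MeasurableSpace Ω]
    {μ : ι → Measure Ω} [∀ i, IsProbabilityMeasure (μ i)] {X Y : Ω → ℝ} {i j : ι}
    (hX : MemLp X 2 (μ i)) (hY : MemLp Y 2 (μ j)) :
    cov[fun ω ↦ X (ω i), fun ω ↦ Y (ω j); Measure.pi μ] = if i = j then cov[X, Y; μ i] else 0 := by
  have h_eval (k : ι) := measurePreserving_eval μ k
  split_ifs with hij
  · subst hij
    conv_rhs => rw [← (h_eval i).map_eq]
    rw [← (h_eval i).map_eq] at hX hY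
    exact (covariance_map_fun hX.1 hY.1 (h_eval i).measurable.aemeasurable).symm
  · have h_indep : IndepFun (fun ω : ι → Ω ↦ ω i) (fun ω ↦ ω j) (Measure.pi μ) :=
      (iIndepFun_pi (X := fun _ ↦ id) fun _ ↦ aemeasurable_id).indepFun hij
    refine IndepFun.covariance_eq_zero ?_ (hX.comp_measurePreserving (h_eval i))
      (hY.comp_measurePreserving (h_eval j))
    refine h_indep.comp₀ (h_eval i).measurable.aemeasurable (h_eval j).measurable.aemeasurable
      ?_ ?_
    · exact (h_eval i).map_eq ▸ hX.aemeasurable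
    · exact (h_eval j).map_eq ▸ hY.aemeasurable

variable {E : ι → Type*} [∀ i, NormedAddCommGroup (E i)]
  [∀ i, NormedSpace ℝ (E i)] [∀ i, CompleteSpace (E i)] [∀ i, SecondCountableTopology (E i)]
  [∀ i, MeasurableSpace (E i)] [∀ i, BorelSpace (E i)] (μ : ∀ i, Measure (E i))
  [∀ i, IsGaussian (μ i)]

instance isGaussian_pi : IsGaussian (Measure.pi μ) := by
  have h_eval (i : ι) : HasGaussianLaw (fun x : ∀ i, E i ↦ x i) (Measure.pi μ) :=
    (measurePreserving_eval μ i).hasLaw.hasGaussianLaw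
  have h_indep : iIndepFun (fun i (x : ∀ i, E i) ↦ x i) (Measure.pi μ) :=
    iIndepFun_pi (X := fun _ ↦ id) fun _ ↦ aemeasurable_id
  simpa using (h_indep.hasGaussianLaw h_eval).isGaussian_map

variable {μ}

lemma integral_id_pi_eq_zero (hμ : ∀ i, (μ i)[id] = 0) : (Measure.pi μ)[id] = 0 := by
  ext i
  rw [eval_integral (fun j ↦ IsGaussian.integrable_id.eval j)]
  simpa using (integral_comp_eval (μ := μ) (i := i) aestronglyMeasurable_id).trans (hμ i)

end ProductMeasure

section GaussianMatrix

variable {ι κ : Type*}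

/-- The law of a random `ι × κ` matrix whose entries are independent centered Gaussians of
variance `v`, as a measure on functions; `Matrix.of` turns a sample into a matrix. -/
noncomputable abbrev gaussianMatrixMeasure (ι κ : Type*) [Fintype ι] [Fintype κ] (v : NNReal) :
    Measure (ι → κ → ℝ) :=
  Measure.pi fun _ ↦ Measure.pi fun _ ↦ gaussianReal 0 v

/-- The linear functional reading off the `(i, a)` entry of a matrix; entries are treated as
elements of the dual space so that Isserlis' formula applies to them. -/
def entryDual (i : ι) (a : κ) : StrongDual ℝ (ι → κ → ℝ) :=
  (ContinuousLinearMap.proj (R := ℝ) (φ := fun _ : κ ↦ ℝ) a).comp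
    (ContinuousLinearMap.proj (R := ℝ) (φ := fun _ : ι ↦ κ → ℝ) i)

@[simp] lemma entryDual_apply (i : ι) (a : κ) (Q : ι → κ → ℝ) : entryDual i a Q = Q i a := rfl

variable [Fintype κ]

lemma gram_apply_mul_gram_apply (Q : ι → κ → ℝ) (i p q j : ι) :
    (of Q * (of Q)ᵀ) i p * (of Q * (of Q)ᵀ) q j = ∑ a, ∑ b,
      entryDual i a Q * entryDual p a Q * entryDual q b Q * entryDual j b Q := by
  simp only [mul_apply, of_apply, transpose_apply, entryDual_apply, Finset.sum_mul_sum, mul_assoc]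

variable [Fintype ι]

lemma integral_id_gaussianMatrixMeasure (v : NNReal) :
    (gaussianMatrixMeasure ι κ v)[id] = 0 :=
  integral_id_pi_eq_zero fun _ ↦ integral_id_pi_eq_zero fun _ ↦ integral_id_gaussianReal

lemma integrable_gram_apply_mul_gram_apply (v : NNReal) (i p q j : ι) :
    Integrable (fun Q ↦ (of Q * (of Q)ᵀ) i p * (of Q * (of Q)ᵀ) q j)
      (gaussianMatrixMeasure ι κ v) := by
  simp only [gram_apply_mul_gram_apply]
  exact integrable_finsetSum _ fun a _ ↦ integrable_finsetSum _ fun b _ ↦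
    integrable_mul_mul_mul_dual _ _ _ _ _

variable [DecidableEq ι]

lemma covarianceBilinDual_entryDual [DecidableEq κ] (v : NNReal) (i p : ι) (a b : κ) :
    covarianceBilinDual (gaussianMatrixMeasure ι κ v) (entryDual i a) (entryDual p b) =
      v * ((1 : Matrix ι ι ℝ) i p * (1 : Matrix κ κ ℝ) a b) := by
  have h_entry (c : κ) : MemLp (fun x : κ → ℝ ↦ x c) 2 (Measure.pi fun _ : κ ↦ gaussianReal 0 v) :=
    IsGaussian.memLp_two_id.eval c
  have h_real : MemLp id 2 (gaussianReal 0 v) := IsGaussian.memLp_two_id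
  have h_row : cov[fun x : κ → ℝ ↦ x a, fun x ↦ x b; Measure.pi fun _ : κ ↦ gaussianReal 0 v] =
      if a = b then (v : ℝ) else 0 := by
    rw [← variance_id_gaussianReal (μ := 0), ← covariance_self aemeasurable_id]
    exact covariance_eval_pi (μ := fun _ : κ ↦ gaussianReal 0 v) h_real h_real
  calc covarianceBilinDual (gaussianMatrixMeasure ι κ v) (entryDual i a) (entryDual p b)
    _ = cov[entryDual i a, entryDual p b; gaussianMatrixMeasure ι κ v] :=
        covarianceBilinDual_eq_covariance IsGaussian.memLp_two_id _ _
    _ = if i = p then cov[fun x : κ → ℝ ↦ x a, fun x ↦ x b;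
          Measure.pi fun _ : κ ↦ gaussianReal 0 v] else 0 :=
        covariance_eval_pi (μ := fun _ : ι ↦ Measure.pi fun _ : κ ↦ gaussianReal 0 v)
          (h_entry a) (h_entry b)
    _ = v * ((1 : Matrix ι ι ℝ) i p * (1 : Matrix κ κ ℝ) a b) := by
        rw [h_row]
        simp only [one_apply, mul_ite, mul_one, mul_zero]
        split_ifs <;> rfl

lemma integral_entryDual_mul_mul_mul [DecidableEq κ] (v : NNReal) (i p q j : ι) (a b : κ) :
    ∫ Q, entryDual i a Q * entryDual p a Q * entryDual q b Q * entryDual j b Q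
        ∂gaussianMatrixMeasure ι κ v =
      (v : ℝ) ^ 2 * ((1 : Matrix ι ι ℝ) i p * (1 : Matrix ι ι ℝ) q j
        + ((1 : Matrix ι ι ℝ) i q * (1 : Matrix ι ι ℝ) p j
          + (1 : Matrix ι ι ℝ) i j * (1 : Matrix ι ι ℝ) p q) * (1 : Matrix κ κ ℝ) a b) := by
  have h_idem : (1 : Matrix κ κ ℝ) a b * (1 : Matrix κ κ ℝ) a b = (1 : Matrix κ κ ℝ) a b := by
    simp only [one_apply, mul_ite, mul_one, mul_zero]
    split_ifs <;> rfl
  rw [integral_dual_mul_mul_mul (integral_id_gaussianMatrixMeasure v)]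
  simp only [covarianceBilinDual_entryDual, one_apply_eq]
  linear_combination (v : ℝ) ^ 2 * ((1 : Matrix ι ι ℝ) i q * (1 : Matrix ι ι ℝ) p j
    + (1 : Matrix ι ι ℝ) i j * (1 : Matrix ι ι ℝ) p q) * h_idem

lemma integral_gram_apply_mul_gram_apply (v : NNReal) (i p q j : ι) :
    ∫ Q, (of Q * (of Q)ᵀ) i p * (of Q * (of Q)ᵀ) q j ∂gaussianMatrixMeasure ι κ v =
      (v : ℝ) ^ 2 * Fintype.card κ *
        (Fintype.card κ * ((1 : Matrix ι ι ℝ) i p * (1 : Matrix ι ι ℝ) q j)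
          + (1 : Matrix ι ι ℝ) i q * (1 : Matrix ι ι ℝ) p j
          + (1 : Matrix ι ι ℝ) i j * (1 : Matrix ι ι ℝ) p q) := by
  classical
  have h_int (a b : κ) := integrable_mul_mul_mul_dual (gaussianMatrixMeasure ι κ v)
    (entryDual i a) (entryDual p a) (entryDual q b) (entryDual j b)
  have h_sum : ∑ a : κ, ∑ b, (1 : Matrix κ κ ℝ) a b = Fintype.card κ := by
    simp [one_apply]
  simp only [gram_apply_mul_gram_apply]
  rw [integral_finsetSum _ fun a _ ↦ integrable_finsetSum _ fun b _ ↦ h_int a b]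
  simp_rw [integral_finsetSum _ fun b _ ↦ h_int _ b, integral_entryDual_mul_mul_mul,
    ← Finset.mul_sum, Finset.sum_add_distrib, ← Finset.mul_sum, h_sum, Finset.sum_const,
    Finset.card_univ, nsmul_eq_mul]
  ring

theorem integral_gram_mul_mul_gram (v : NNReal) (A : Matrix ι ι ℝ) :
    (of fun i j ↦ ∫ Q, (of Q * (of Q)ᵀ * A * (of Q * (of Q)ᵀ)) i j
        ∂gaussianMatrixMeasure ι κ v) =
      ((v : ℝ) ^ 2 * Fintype.card κ) •
        ((Fintype.card κ : ℝ) • A + Aᵀ + trace A • (1 : Matrix ι ι ℝ)) := by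
  ext i j
  have h_expand (G : Matrix ι ι ℝ) : (G * A * G) i j = ∑ q, ∑ p, A p q * (G i p * G q j) := by
    simp only [mul_apply, Finset.sum_mul]
    exact Finset.sum_congr rfl fun q _ ↦ Finset.sum_congr rfl fun p _ ↦ by ring
  have h_int (p q : ι) :=
    (integrable_gram_apply_mul_gram_apply (κ := κ) v i p q j).const_mul (A p q)
  have h_direct : ∑ q, ∑ p, A p q * ((1 : Matrix ι ι ℝ) i p * (1 : Matrix ι ι ℝ) q j) = A i j := by
    simp [one_apply]
  have h_swap : ∑ q, ∑ p, A p q * ((1 : Matrix ι ι ℝ) i q * (1 : Matrix ι ι ℝ) p j) = A j i := by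
    simp [one_apply]
  have h_trace : ∑ q, ∑ p, A p q * ((1 : Matrix ι ι ℝ) i j * (1 : Matrix ι ι ℝ) p q) =
      trace A * (1 : Matrix ι ι ℝ) i j := by
    simp [one_apply, trace]
  calc ∫ Q, (of Q * (of Q)ᵀ * A * (of Q * (of Q)ᵀ)) i j ∂gaussianMatrixMeasure ι κ v
    _ = ∑ q, ∑ p, A p q * ∫ Q, (of Q * (of Q)ᵀ) i p * (of Q * (of Q)ᵀ) q j
          ∂gaussianMatrixMeasure ι κ v := by
        simp only [h_expand]
        rw [integral_finsetSum _ fun q _ ↦ integrable_finsetSum _ fun p _ ↦ h_int p q]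
        simp_rw [integral_finsetSum _ fun p _ ↦ h_int p _, integral_const_mul]
    _ = (v : ℝ) ^ 2 * Fintype.card κ *
          (Fintype.card κ * A i j + A j i + trace A * (1 : Matrix ι ι ℝ) i j) := by
        simp_rw [integral_gram_apply_mul_gram_apply, ← h_direct, ← h_swap, ← h_trace,
          Finset.mul_sum, ← Finset.sum_add_distrib, Finset.mul_sum]
        exact Finset.sum_congr rfl fun q _ ↦ Finset.sum_congr rfl fun p _ ↦ by ring

end GaussianMatrix

lemma opNorm_smul {m : ℕ} {c : ℝ} (hc : 0 ≤ c) (A : Matrix (Fin m) (Fin m) ℝ) :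
    opNorm (c • A) = c * opNorm A := by
  rw [opNorm, opNorm, map_smul, norm_smul, Real.norm_of_nonneg hc]

/-- The norm-k Q-seminorm formula:
`‖E[Q Qᵀ A Q Qᵀ]‖ = (m/k)·‖((k+1)/m)·A + (tr A/m)·I‖` for symmetric `A`, where the entries of
the `m × k` matrix `Q` are i.i.d. centered Gaussians of variance `1/k`. -/
theorem norm_k_Q_seminorm (m k : ℕ) (hm : 1 ≤ m) (hk : 1 ≤ k)
    (A : Matrix (Fin m) (Fin m) ℝ) (hA : A.IsSymm) :
    opNorm (Matrix.of fun i j => ∫ Q,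
        ((Matrix.of Q) * (Matrix.of Q)ᵀ * A * ((Matrix.of Q) * (Matrix.of Q)ᵀ)) i j
          ∂(Measure.pi fun _ : Fin m => Measure.pi fun _ : Fin k =>
              gaussianReal 0 ((k : NNReal))⁻¹)) =
      ((m : ℝ) / k) *
        opNorm
          ((((k : ℝ) + 1) / m) • A +
            (Matrix.trace A / m) • (1 : Matrix (Fin m) (Fin m) ℝ)) := by
  rw [integral_gram_mul_mul_gram, hA.eq, ← opNorm_smul (by positivity)]
  congr 1
  ext i j
  have hm_ne : (m : ℝ) ≠ 0 := by positivity
  have hk_ne : (k : ℝ) ≠ 0 := by positivity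
  simp only [Fintype.card_fin, NNReal.coe_inv, NNReal.coe_natCast, Matrix.smul_apply,
    Matrix.add_apply, smul_eq_mul]
  field_simp
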